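/- Let α ∈ (0,1) and λ > 0. The function η(t) = E_α(−λ t^α) satisfies the Volterra integral equation equivalent to the Caputo initial value problem with η(0) = 1: for every t ≥ 0, E_α(−λ t^α) = 1 − (λ/Γ(α)) ∫_0^t (t−s)^(α−1) E_α(−λ s^α) ds. -/

import Mathlib

/-- The Mittag-Leffler function `E_α(x) = ∑_{k=0}^∞ x^k / Γ(αk + 1)`. -/
noncomputable def mittagLeffler (α x : ℝ) : ℝ :=
  ∑' k : ℕ, x ^ k / Real.Gamma (α * k + 1)

theorem ml_gamma_ratio {α x : ℝ} (h0 : 0 < α) (h1 : α < 1) (hx : 0 ≤ x) :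
    (x + α) ^ α * Real.Gamma (x + 1) ≤ Real.Gamma (x + α + 1) := by
  have hp : 0 < x + α := by linarith
  have h := Real.Gamma_mul_add_mul_le_rpow_Gamma_mul_rpow_Gamma (s := x + α) (t := x + α + 1)
    (a := α) (b := 1 - α) hp (by linarith) h0 (by linarith) (by ring)
  have e : α * (x + α) + (1 - α) * (x + α + 1) = x + 1 := by ring
  have hG : 0 < Real.Gamma (x + α) := Real.Gamma_pos_of_pos hp
  rw [e] at h
  calc (x + α) ^ α * Real.Gamma (x + 1)
      ≤ (x + α) ^ α * (Real.Gamma (x + α) ^ α * Real.Gamma (x + α + 1) ^ (1 - α)) := by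
        gcongr
    _ = ((x + α) * Real.Gamma (x + α)) ^ α * Real.Gamma (x + α + 1) ^ (1 - α) := by
        rw [Real.mul_rpow hp.le hG.le]; ring
    _ = Real.Gamma (x + α + 1) := by
        rw [← Real.Gamma_add_one hp.ne', ← Real.rpow_add (Real.Gamma_pos_of_pos (by linarith))]
        simp

theorem ml_summable {α : ℝ} (h0 : 0 < α) (h1 : α < 1) (x : ℝ) :
    Summable fun k : ℕ => x ^ k / Real.Gamma (α * k + 1) := by
  refine summable_of_ratio_norm_eventually_le (r := 1 / 2) (by norm_num) ?_
  have ht : Filter.Tendsto (fun n : ℕ => (α * (n : ℝ) + α) ^ α) Filter.atTop Filter.atTop :=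
    (tendsto_rpow_atTop h0).comp (Filter.tendsto_atTop_add_const_right _ _
      (tendsto_natCast_atTop_atTop.const_mul_atTop h0))
  filter_upwards [ht.eventually_ge_atTop (2 * |x|)] with n hn
  have hg := ml_gamma_ratio h0 h1 (x := α * n) (by positivity)
  have hA : 0 < Real.Gamma (α * n + 1) := Real.Gamma_pos_of_pos (by positivity)
  have hB : 0 < Real.Gamma (α * n + α + 1) := Real.Gamma_pos_of_pos (by positivity)
  have e : α * ((n + 1 : ℕ) : ℝ) + 1 = α * n + α + 1 := by push_cast; ring
  rw [e, norm_div, norm_div, norm_pow, norm_pow, Real.norm_eq_abs, Real.norm_of_nonneg hA.le,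
    Real.norm_of_nonneg hB.le, pow_succ, ← mul_div_assoc, div_le_div_iff₀ hB hA]
  have h2 : 2 * |x| * Real.Gamma (α * n + 1) ≤ Real.Gamma (α * n + α + 1) :=
    le_trans (by gcongr) hg
  have h3 : 0 ≤ |x| ^ n := by positivity
  nlinarith [mul_le_mul_of_nonneg_left h2 h3]

theorem ml_beta {u v t : ℝ} (hu : 0 < u) (hv : 0 < v) (ht : 0 < t) :
    ∫ s in (0:ℝ)..t, (t - s) ^ (v - 1) * s ^ (u - 1) =
      t ^ (u + v - 1) * (Real.Gamma u * Real.Gamma v / Real.Gamma (u + v)) := by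
  have h := Complex.betaIntegral_scaled (u : ℂ) (v : ℂ) ht
  rw [Complex.betaIntegral_eq_Gamma_mul_div _ _ (by simpa) (by simpa)] at h
  have e : ∫ s in (0:ℝ)..t, (s : ℂ) ^ ((u : ℂ) - 1) * ((t : ℂ) - s) ^ ((v : ℂ) - 1) =
      ∫ s in (0:ℝ)..t, (((t - s) ^ (v - 1) * s ^ (u - 1) : ℝ) : ℂ) := by
    refine intervalIntegral.integral_congr fun s hs => ?_
    rw [Set.uIcc_of_le ht.le] at hs
    beta_reduce
    rw [Complex.ofReal_mul, Complex.ofReal_cpow hs.1, Complex.ofReal_cpow (sub_nonneg.2 hs.2)]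
    push_cast
    ring
  rw [e, intervalIntegral.integral_ofReal, ← Complex.ofReal_add, Complex.Gamma_ofReal,
    Complex.Gamma_ofReal, Complex.Gamma_ofReal, ← Complex.ofReal_one, ← Complex.ofReal_sub,
    ← Complex.ofReal_cpow ht.le] at h
  exact_mod_cast h

theorem mittagLeffler_volterra_equation (α lam : ℝ) (hα : α ∈ Set.Ioo (0:ℝ) 1)
    (hlam : 0 < lam) :
    ∀ t : ℝ, 0 ≤ t →
      mittagLeffler α (-lam * t ^ α) =
        1 - (lam / Real.Gamma α) *
          ∫ s in (0:ℝ)..t, (t - s) ^ (α - 1) * mittagLeffler α (-lam * s ^ α) := by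
  obtain ⟨h0, h1⟩ := hα
  intro t ht
  have hsum := ml_summable h0 h1
  have hsplit : mittagLeffler α (-lam * t ^ α) =
      1 + ∑' k : ℕ, (-lam * t ^ α) ^ (k + 1) / Real.Gamma (α * ((k + 1 : ℕ) : ℝ) + 1) := by
    rw [mittagLeffler, (hsum _).tsum_eq_zero_add]
    simp
  rcases ht.eq_or_lt with rfl | ht
  · rw [hsplit]
    simp [Real.zero_rpow h0.ne']
  have hG : 0 < Real.Gamma α := Real.Gamma_pos_of_pos h0
  have hGk : ∀ k : ℕ, 0 < Real.Gamma (α * k + 1) := fun k => Real.Gamma_pos_of_pos (by positivity)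
  have key : HasSum (fun k : ℕ => ∫ s in (0:ℝ)..t, (t - s) ^ (α - 1) *
        ((-lam * s ^ α) ^ k / Real.Gamma (α * k + 1)))
      (∫ s in (0:ℝ)..t, (t - s) ^ (α - 1) * mittagLeffler α (-lam * s ^ α)) := by
    refine intervalIntegral.hasSum_integral_of_dominated_convergence
      (fun k s => (t - s) ^ (α - 1) * ((lam * t ^ α) ^ k / Real.Gamma (α * k + 1))) ?_ ?_ ?_ ?_ ?_
    · intro k
      apply Measurable.aestronglyMeasurable
      fun_prop
    · intro k
      refine Filter.Eventually.of_forall fun s hs => ?_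
      rw [Set.uIoc_of_le ht.le] at hs
      have hs0 := hs.1
      have hts : 0 ≤ t - s := sub_nonneg.2 hs.2
      rw [norm_mul, norm_div, norm_pow, norm_mul, norm_neg, Real.norm_of_nonneg hlam.le,
        Real.norm_of_nonneg (hGk k).le, Real.norm_of_nonneg (Real.rpow_nonneg hts _),
        Real.norm_of_nonneg (Real.rpow_nonneg hs0.le _)]
      have := hGk k
      have := Real.rpow_nonneg hts (α - 1)
      gcongr
      exact hs.2
    · exact Filter.Eventually.of_forall fun s _ => (hsum _).mul_left _
    · simp_rw [tsum_mul_left]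
      refine IntervalIntegrable.mul_const ?_ _
      have := (intervalIntegral.intervalIntegrable_rpow' (a := t) (b := 0) (r := α - 1)
        (by linarith)).comp_sub_left t
      simpa using this
    · exact Filter.Eventually.of_forall fun s _ => (hsum _).hasSum.mul_left _
  rw [hsplit, ← key.tsum_eq, ← tsum_mul_left, sub_eq_add_neg, ← tsum_neg]
  congr 1
  refine tsum_congr fun k => ?_
  have hI : ∫ s in (0:ℝ)..t, (t - s) ^ (α - 1) *
        ((-lam * s ^ α) ^ k / Real.Gamma (α * k + 1)) =
      (-lam) ^ k / Real.Gamma (α * k + 1) *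
        ∫ s in (0:ℝ)..t, (t - s) ^ (α - 1) * s ^ ((α * k + 1) - 1) := by
    rw [← intervalIntegral.integral_const_mul]
    refine intervalIntegral.integral_congr fun s hs => ?_
    rw [Set.uIcc_of_le ht.le] at hs
    beta_reduce
    rw [add_sub_cancel_right, Real.rpow_mul hs.1, Real.rpow_natCast, mul_pow]
    ring
  rw [hI, ml_beta (by positivity) h0 ht]
  have e1 : α * k + 1 + α - 1 = α * ((k + 1 : ℕ) : ℝ) := by push_cast; ring
  have e2 : α * k + 1 + α = α * ((k + 1 : ℕ) : ℝ) + 1 := by push_cast; ring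
  rw [e1, e2, Real.rpow_mul ht.le, Real.rpow_natCast, mul_pow]
  have := (hGk k).ne'
  have := (hGk (k + 1)).ne'
  field_simp
  ring
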